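/- Let b > 0 be real. For every z ∈ ℂ with |Im z| < b/2 one has e_b(z − ib⁻¹/2) = (1 + e^{2πb⁻¹z})·e_b(z + ib⁻¹/2), where both sides are given directly by the integral representation of e_b (both arguments lie in the strip |Im z| < (b+b⁻¹)/2). -/

import Mathlib

open MeasureTheory Complex Real Filter Topology

noncomputable section

/-- The special point `c_b = i(b+b⁻¹)/2`. -/
def cb (b : ℝ) : ℂ := Complex.I * ((b : ℂ) + (b : ℂ)⁻¹) / 2

/-- The integrand in the integral representation of the noncompact quantum dilogarithm. -/
def ebIntegrand (b ε : ℝ) (z : ℂ) (t : ℝ) : ℂ :=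
  Complex.exp (-2 * Complex.I * z * ((t : ℂ) + Complex.I * (ε : ℂ))) /
    (((t : ℂ) + Complex.I * (ε : ℂ)) *
      Complex.sinh ((b : ℂ) * ((t : ℂ) + Complex.I * (ε : ℂ))) *
      Complex.sinh ((b : ℂ)⁻¹ * ((t : ℂ) + Complex.I * (ε : ℂ))))

/-- The noncompact quantum dilogarithm defined with contour parameter `ε`. -/
def ebE (b ε : ℝ) (z : ℂ) : ℂ :=
  Complex.exp ((1 / 4 : ℂ) * ∫ t : ℝ, ebIntegrand b ε z t)

/-- The noncompact quantum dilogarithm `e_b` (canonical choice of contour parameter;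
the value is independent of this choice). -/
def eb (b : ℝ) (z : ℂ) : ℂ := ebE b (π * min b b⁻¹ / 2) z

/-! Subtracting the exponents of `e_b(z - ib⁻¹/2)` and `e_b(z + ib⁻¹/2)` produces a numerator
`-2 e^{-2izw} sinh(b⁻¹w)`, which cancels one of the two `sinh` factors. After scaling by `b`, what
remains is `Φ(a) = ∫ e^{av} / (v sinh v) dv` over a horizontal line, with `a = -2iz/b` and
`|Re a| < 1`. Differentiating in `a` removes the factor `1/v`, and on the line `Im v = π/2` the
integral `Φ'(a)` is a Beta integral, evaluated by the reflection formula. It follows that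
`e^{Φ(a)/2} (1 + e^{iπa})` has zero derivative; as it tends to `1` when `Im a → ∞`, it is `1`. -/

theorem integral_horizontal_line_eq {E : Type*} [NormedAddCommGroup E] [NormedSpace ℂ E]
    {f : ℂ → E} {c d : ℝ} {B : ℝ → ℝ}
    (hf : DifferentiableOn ℂ f (im ⁻¹' Set.uIcc c d)) (hB : Integrable B)
    (hB₀ : Tendsto B (cocompact ℝ) (𝓝 0)) (hfB : ∀ w : ℂ, w.im ∈ Set.uIcc c d → ‖f w‖ ≤ B w.re) :
    ∫ t : ℝ, f (t + c * I) = ∫ t : ℝ, f (t + d * I) := by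
  have hline : ∀ y ∈ Set.uIcc c d, Integrable fun t : ℝ => f (t + y * I) := fun y hy =>
    hB.mono'
      (hf.continuousOn.comp_continuous (by fun_prop) (by simpa using hy)).aestronglyMeasurable
      (ae_of_all _ fun t => by simpa using hfB (t + y * I) (by simpa using hy))
  have hside : ∀ {s : ℝ → ℝ}, Tendsto s atTop (cocompact ℝ) →
      Tendsto (fun R => I • ∫ y in c..d, f (s R + y * I)) atTop (𝓝 0) := fun {s} hs => by
    refine squeeze_zero_norm (a := fun R => B (s R) * |d - c|) (fun R => ?_)
      (by simpa using (hB₀.comp hs).mul_const |d - c|)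
    rw [norm_smul, norm_I, one_mul]
    refine intervalIntegral.norm_integral_le_of_norm_le_const fun y hy => ?_
    simpa using hfB (s R + y * I) (by simpa using Set.uIoc_subset_uIcc hy)
  have hrect : ∀ R : ℝ, (∫ t in -R..R, f (t + c * I)) - (∫ t in -R..R, f (t + d * I)) +
      I • (∫ y in c..d, f (R + y * I)) - I • (∫ y in c..d, f ((-R : ℝ) + y * I)) = 0 := fun R => by
    simpa using integral_boundary_rect_eq_zero_of_differentiableOn f ((-R : ℝ) + c * I) (R + d * I)
      (hf.mono fun w hw => by simpa using hw.2)
  have hlim := (((intervalIntegral_tendsto_integral (hline c Set.left_mem_uIcc)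
      tendsto_neg_atTop_atBot tendsto_id).sub
    (intervalIntegral_tendsto_integral (hline d Set.right_mem_uIcc)
      tendsto_neg_atTop_atBot tendsto_id)).add
    (hside (tendsto_id.mono_right atTop_le_cocompact))).sub
    (hside (tendsto_neg_atTop_atBot.mono_right atBot_le_cocompact))
  simp only [id_eq, hrect, add_zero, sub_zero] at hlim
  exact sub_eq_zero.1 (tendsto_nhds_unique tendsto_const_nhds hlim).symm

theorem eq_of_hasDerivAt_zero_of_abs_re_lt {E : Type*} [NormedAddCommGroup E] [NormedSpace ℂ E]
    {f : ℂ → E} {r : ℝ} (hf : ∀ x : ℂ, |x.re| < r → HasDerivAt f 0 x) {x y : ℂ}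
    (hx : |x.re| < r) (hy : |y.re| < r) : f x = f y := by
  have hstrip : {x : ℂ | |x.re| < r} = re ⁻¹' Set.Ioo (-r) r := by
    ext x
    simp [abs_lt]
  have hopen : IsOpen {x : ℂ | |x.re| < r} := by
    rw [hstrip]
    exact isOpen_Ioo.preimage continuous_re
  have hconn : IsPreconnected {x : ℂ | |x.re| < r} := by
    rw [hstrip]
    exact ((convex_Ioo _ _).linear_preimage reLm).isPreconnected
  exact hopen.is_const_of_deriv_eq_zero hconn
    (fun x hx => (hf x hx).differentiableAt.differentiableWithinAt)
    (fun x hx => (hf x hx).deriv) hx hy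

theorem betaIntegral_eq_integral_exp_mul_div_one_add_exp_cpow (u v : ℂ) :
    betaIntegral u v = ∫ x : ℝ, Complex.exp (u * x) / (1 + Complex.exp x) ^ (u + v) := by
  have hsubst := integral_image_eq_integral_abs_deriv_smul MeasurableSet.univ
    (fun x _ => (hasDerivAt_sigmoid x).hasDerivWithinAt) sigmoid_injective.injOn
    (fun p : ℝ => (p : ℂ) ^ (u - 1) * (1 - (p : ℂ)) ^ (v - 1))
  rw [betaIntegral, intervalIntegral.integral_of_le zero_le_one, integral_Ioc_eq_integral_Ioo,
    ← range_sigmoid, ← Set.image_univ, hsubst, setIntegral_univ]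
  refine integral_congr_ae (ae_of_all _ fun x => ?_)
  obtain ⟨q, hq, hq_inv⟩ : ∃ q : ℝ, 0 < q ∧ 1 + Real.exp x = q⁻¹ :=
    ⟨(1 + Real.exp x)⁻¹, by positivity, (inv_inv _).symm⟩
  have hq_ne : (q : ℂ) ≠ 0 := ofReal_ne_zero.2 hq.ne'
  have hq_mul : (1 + Real.exp x) * q = 1 := by rw [hq_inv, inv_mul_cancel₀ hq.ne']
  have hσ : sigmoid x = Real.exp x * q := by
    rw [sigmoid_def, Real.exp_neg]
    field_simp
    linear_combination -hq_mul
  have hσ' : 1 - Real.exp x * q = q := by linear_combination -hq_mul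
  have hσ'' : 1 - Complex.exp x * q = q := by exact_mod_cast hσ'
  have hden : (1 + Complex.exp x) ^ (u + v) = ((q : ℂ) ^ (u + v))⁻¹ := by
    rw [← ofReal_exp, ← ofReal_one, ← ofReal_add, hq_inv, ofReal_inv,
      inv_cpow _ _ (by rw [arg_ofReal_of_nonneg hq.le]; exact pi_ne_zero.symm)]
  have hnum : Complex.exp x ^ u = Complex.exp (u * x) := by
    rw [cpow_def_of_ne_zero (Complex.exp_ne_zero _), ← ofReal_exp, ← ofReal_log (Real.exp_pos x).le,
      Real.log_exp, mul_comm]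
  simp only [hσ, hσ', ofReal_mul, ofReal_exp, hσ'', real_smul]
  rw [abs_of_pos (by positivity), hden, div_inv_eq_mul, ← hnum, cpow_sub _ _ hq_ne,
    cpow_sub _ _ (by simp [hq_ne]), cpow_one, cpow_one, cpow_add _ _ hq_ne, ← ofReal_exp,
    mul_cpow_ofReal_nonneg (Real.exp_pos x).le hq.le, ofReal_mul, ofReal_mul]
  field_simp [hq_ne, Complex.exp_ne_zero]

theorem integral_exp_mul_div_one_add_exp {s : ℂ} (hs₀ : 0 < s.re) (hs₁ : s.re < 1) :
    ∫ x : ℝ, Complex.exp (s * x) / (1 + Complex.exp x) = π / Complex.sin (π * s) := by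
  have hbeta := betaIntegral_eq_integral_exp_mul_div_one_add_exp_cpow s (1 - s)
  have hGamma := Gamma_mul_Gamma_eq_betaIntegral hs₀ (t := 1 - s) (by simpa using hs₁)
  rw [Complex.Gamma_mul_Gamma_one_sub] at hGamma
  simpa [hbeta] using hGamma.symm

theorem integral_exp_mul_div_cosh {a : ℂ} (ha : |a.re| < 1) :
    ∫ t : ℝ, Complex.exp (a * t) / Complex.cosh t = π / Complex.cos (π * a / 2) := by
  obtain ⟨ha₁, ha₂⟩ := abs_lt.1 ha
  have hre : ((1 + a) / 2).re = (1 + a.re) / 2 := by simp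
  have hcosh : ∀ t : ℝ, Complex.exp (a * t) / Complex.cosh t =
      2 * (Complex.exp ((1 + a) / 2 * (2 * t : ℝ)) / (1 + Complex.exp (2 * t : ℝ))) := fun t => by
    rw [Complex.cosh, show (1 + a) / 2 * (2 * t : ℝ) = t + a * t by push_cast; ring,
      show ((2 * t : ℝ) : ℂ) = t + t by push_cast; ring, Complex.exp_add, Complex.exp_add,
      Complex.exp_neg]
    have := Complex.exp_ne_zero t
    field_simp
    ring
  simp_rw [hcosh]
  rw [integral_const_mul, Measure.integral_comp_mul_left
      (fun x : ℝ => Complex.exp ((1 + a) / 2 * x) / (1 + Complex.exp x)),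
    integral_exp_mul_div_one_add_exp (by rw [hre]; linarith) (by rw [hre]; linarith),
    show π * ((1 + a) / 2) = π * a / 2 + (π : ℂ) / 2 by ring, Complex.sin_add_pi_div_two]
  simp

theorem one_add_exp_pi_mul_I_mul_ne_zero {a : ℂ} (ha : |a.re| < 1) :
    1 + Complex.exp (π * I * a) ≠ 0 := by
  intro h
  have hexp : Complex.exp (π * I * a) = Complex.exp (π * I) := by
    rw [exp_pi_mul_I]
    linear_combination h
  obtain ⟨n, hn⟩ := exp_eq_exp_iff_exists_int.1 hexp
  have han : a = (1 + 2 * n : ℤ) := by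
    have hπI : (π : ℂ) * I ≠ 0 := mul_ne_zero (ofReal_ne_zero.2 pi_ne_zero) I_ne_zero
    refine mul_left_cancel₀ hπI ?_
    push_cast
    linear_combination hn
  rw [han, intCast_re, ← Int.cast_abs] at ha
  have : 1 + 2 * n = 0 := Int.abs_lt_one_iff.1 (by exact_mod_cast ha)
  lia

section SinhBound

variable {w : ℂ}

theorem norm_sinh_sq (w : ℂ) :
    ‖Complex.sinh w‖ ^ 2 = Real.sinh w.re ^ 2 + Real.sin w.im ^ 2 := by
  have hsinh : Complex.sinh w = (Real.sinh w.re * Real.cos w.im : ℝ) +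
      (Real.cosh w.re * Real.sin w.im : ℝ) * I := by
    conv_lhs => rw [← re_add_im w, Complex.sinh_add, Complex.sinh_mul_I, Complex.cosh_mul_I]
    push_cast
    ring
  rw [hsinh, ← normSq_eq_norm_sq, normSq_add_mul_I]
  linear_combination Real.sinh w.re ^ 2 * Real.sin_sq_add_cos_sq w.im +
    Real.sin w.im ^ 2 * Real.cosh_sq w.re

theorem abs_sin_im_mul_cosh_re_le_norm_sinh (w : ℂ) :
    |Real.sin w.im| * Real.cosh w.re ≤ ‖Complex.sinh w‖ := by
  refine le_of_sq_le_sq ?_ (norm_nonneg _)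
  rw [norm_sinh_sq, mul_pow, sq_abs, Real.cosh_sq]
  nlinarith [Real.sin_sq_le_one w.im, sq_nonneg (Real.sinh w.re)]

theorem sinh_ne_zero_of_sin_im_ne_zero (hw : Real.sin w.im ≠ 0) : Complex.sinh w ≠ 0 :=
  norm_pos_iff.1 <| (mul_pos (abs_pos.2 hw) (Real.cosh_pos _)).trans_le
    (abs_sin_im_mul_cosh_re_le_norm_sinh w)

end SinhBound

section ExpNegAbs

variable {c : ℝ}

theorem integrable_exp_neg_mul_abs (hc : 0 < c) : Integrable fun t : ℝ => Real.exp (-c * |t|) := by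
  rw [← integrableOn_univ, ← Set.Iic_union_Ioi (a := (0 : ℝ))]
  refine IntegrableOn.union ?_ ?_
  · refine (integrableOn_exp_mul_Iic hc 0).congr_fun (fun t ht => ?_) measurableSet_Iic
    simp only [abs_of_nonpos (Set.mem_Iic.1 ht), neg_mul_neg]
  · refine (integrableOn_exp_mul_Ioi (neg_neg_of_pos hc) 0).congr_fun (fun t ht => ?_)
      measurableSet_Ioi
    simp only [abs_of_pos (Set.mem_Ioi.1 ht)]

theorem tendsto_exp_neg_mul_abs_cocompact (hc : 0 < c) :
    Tendsto (fun t : ℝ => Real.exp (-c * |t|)) (cocompact ℝ) (𝓝 0) :=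
  Real.tendsto_exp_atBot.comp <|
    tendsto_norm_cocompact_atTop.const_mul_atTop_of_neg (neg_neg_of_pos hc)

end ExpNegAbs

theorem integrable_div_add_mul_I {f : ℝ → ℂ} {y : ℝ} (hf : Integrable f) (hy : y ≠ 0) :
    Integrable fun t : ℝ => f t / (t + y * I) := by
  have hnorm : ∀ t : ℝ, |y| ≤ ‖(t + y * I : ℂ)‖ := fun t => by
    simpa using abs_im_le_norm (t + y * I : ℂ)
  have hne : ∀ t : ℝ, (t + y * I : ℂ) ≠ 0 := fun t =>
    norm_pos_iff.1 ((abs_pos.2 hy).trans_le (hnorm t))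
  simp only [div_eq_mul_inv]
  refine hf.mul_bdd (c := |y|⁻¹)
    (Continuous.inv₀ (by fun_prop) hne).aestronglyMeasurable (ae_of_all _ fun t => ?_)
  rw [norm_inv]
  exact inv_anti₀ (abs_pos.2 hy) (hnorm t)

/-- The function `e^{aw} / sinh w`, in terms of which both `ebIntegrand` and the integral that
remains after the shift in `z` are expressed. -/
def expDivSinh (a w : ℂ) : ℂ := Complex.exp (a * w) / Complex.sinh w

section ExpDivSinh

variable {a w : ℂ} {y : ℝ}

theorem norm_expDivSinh_le (a : ℂ) (hw : Real.sin w.im ≠ 0) :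
    ‖expDivSinh a w‖ ≤
      2 * Real.exp (-(a.im * w.im)) / |Real.sin w.im| * Real.exp (-(1 - |a.re|) * |w.re|) := by
  have hcosh : Real.exp |w.re| / 2 ≤ Real.cosh w.re := by
    rw [Real.cosh_eq]
    gcongr
    exact Real.exp_abs_le w.re
  have hsinh : |Real.sin w.im| * (Real.exp |w.re| / 2) ≤ ‖Complex.sinh w‖ :=
    (by gcongr : _ ≤ _).trans (abs_sin_im_mul_cosh_re_le_norm_sinh w)
  have hexp : ‖Complex.exp (a * w)‖ ≤ Real.exp (|a.re| * |w.re| - a.im * w.im) := by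
    rw [norm_exp, mul_re, ← abs_mul]
    gcongr
    exact le_abs_self _
  have := abs_pos.2 hw
  calc ‖expDivSinh a w‖
      ≤ Real.exp (|a.re| * |w.re| - a.im * w.im) / (|Real.sin w.im| * (Real.exp |w.re| / 2)) := by
        rw [expDivSinh, norm_div]
        gcongr
    _ = _ := by
        rw [show -(1 - |a.re|) * |w.re| = |a.re| * |w.re| - |w.re| by ring, Real.exp_sub,
          Real.exp_sub, Real.exp_neg]
        field_simp

theorem differentiableAt_expDivSinh (a : ℂ) (hw : Real.sin w.im ≠ 0) :
    DifferentiableAt ℂ (expDivSinh a) w :=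
  DifferentiableAt.div (by fun_prop) (by fun_prop) (sinh_ne_zero_of_sin_im_ne_zero hw)

theorem continuous_expDivSinh_add_mul_I (a : ℂ) (hy : Real.sin y ≠ 0) :
    Continuous fun t : ℝ => expDivSinh a (t + y * I) :=
  Continuous.div (by fun_prop) (by fun_prop) fun t =>
    sinh_ne_zero_of_sin_im_ne_zero (by simpa using hy)

theorem integrable_expDivSinh (ha : |a.re| < 1) (hy : Real.sin y ≠ 0) :
    Integrable fun t : ℝ => expDivSinh a (t + y * I) :=
  ((integrable_exp_neg_mul_abs (sub_pos.2 ha)).const_mul _).mono'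
    (continuous_expDivSinh_add_mul_I a hy).aestronglyMeasurable
    (ae_of_all _ fun t => by simpa using norm_expDivSinh_le a (w := t + y * I) (by simpa using hy))

theorem integral_expDivSinh_eq_integral {c d : ℝ} (ha : |a.re| < 1) (hc : c ∈ Set.Ioo 0 π)
    (hd : d ∈ Set.Ioo 0 π) :
    ∫ t : ℝ, expDivSinh a (t + c * I) = ∫ t : ℝ, expDivSinh a (t + d * I) := by
  have hsub : Set.uIcc c d ⊆ Set.Ioo 0 π := Set.ordConnected_Ioo.uIcc_subset hc hd
  have hsin : ∀ y ∈ Set.uIcc c d, 0 < Real.sin y := fun y hy => sin_pos_of_mem_Ioo (hsub hy)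
  obtain ⟨C, hC⟩ := isCompact_uIcc.exists_bound_of_continuousOn
    (f := fun y : ℝ => 2 * Real.exp (-(a.im * y)) / |Real.sin y|) (s := Set.uIcc c d)
    (ContinuousOn.div (by fun_prop) (by fun_prop) fun y hy => (abs_pos.2 (hsin y hy).ne').ne')
  refine integral_horizontal_line_eq
    (fun w hw => (differentiableAt_expDivSinh a (hsin _ hw).ne').differentiableWithinAt)
    ((integrable_exp_neg_mul_abs (sub_pos.2 ha)).const_mul C)
    (by simpa using (tendsto_exp_neg_mul_abs_cocompact (sub_pos.2 ha)).const_mul C)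
    fun w hw => (norm_expDivSinh_le a (hsin _ hw).ne').trans ?_
  gcongr
  exact (le_abs_self _).trans (hC w.im hw)

theorem integral_expDivSinh (ha : |a.re| < 1) (hy : y ∈ Set.Ioo 0 π) :
    ∫ t : ℝ, expDivSinh a (t + y * I) =
      -2 * π * I * Complex.exp (π * I * a) / (1 + Complex.exp (π * I * a)) := by
  have hline : ∀ t : ℝ, expDivSinh a (t + (π / 2 : ℝ) * I) =
      -I * Complex.exp (π * I * a / 2) * (Complex.exp (a * t) / Complex.cosh t) := fun t => by
    have hsinh : Complex.sinh (t + (π / 2 : ℝ) * I) = I * Complex.cosh t := by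
      simp [Complex.sinh_add, Complex.sinh_mul_I, Complex.cosh_mul_I, mul_comm I]
    rw [expDivSinh, hsinh, show a * (t + (π / 2 : ℝ) * I) = π * I * a / 2 + a * t by
      push_cast; ring, Complex.exp_add, ← div_div, div_I]
    ring
  rw [integral_expDivSinh_eq_integral ha hy ⟨pi_div_two_pos, div_two_lt_of_pos pi_pos⟩]
  simp_rw [hline]
  rw [integral_const_mul, integral_exp_mul_div_cosh ha, Complex.cos,
    show π * a / 2 * I = π * I * a / 2 by ring, show -(π * a / 2) * I = -(π * I * a / 2) by ring,
    Complex.exp_neg]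
  have hne := one_add_exp_pi_mul_I_mul_ne_zero ha
  rw [show π * I * a = π * I * a / 2 + π * I * a / 2 by ring, Complex.exp_add] at hne ⊢
  simp only [add_halves]
  have := Complex.exp_ne_zero (π * I * a / 2)
  field_simp
  ring

theorem hasDerivAt_expDivSinh_div (a : ℂ) (hw : w ≠ 0) :
    HasDerivAt (fun x => expDivSinh x w / w) (expDivSinh a w) a := by
  refine ((((hasDerivAt_id a).mul_const w).cexp.div_const
    (Complex.sinh w)).div_const w).congr_deriv ?_
  simp only [id_eq, expDivSinh]
  field_simp

/-- The function called `Φ` above: a primitive in `a` of the integral of `expDivSinh a` along the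
line `Im w = y`. For `0 < y` it is the one that decays as `Im a → ∞`. -/
def expDivSinhPrimitive (y : ℝ) (a : ℂ) : ℂ :=
  ∫ t : ℝ, expDivSinh a (t + y * I) / (t + y * I)

theorem hasDerivAt_expDivSinhPrimitive (ha : |a.re| < 1) (hy : Real.sin y ≠ 0) :
    HasDerivAt (expDivSinhPrimitive y) (∫ t : ℝ, expDivSinh a (t + y * I)) a := by
  have hy₀ : y ≠ 0 := fun h => hy (by rw [h, Real.sin_zero])
  have hre : ∀ᶠ x : ℂ in 𝓝 a, |x.re| < (1 + |a.re|) / 2 :=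
    ContinuousAt.eventually_lt (by fun_prop) continuousAt_const (by linarith)
  have him : ∀ᶠ x : ℂ in 𝓝 a, -(x.im * y) < -(a.im * y) + 1 :=
    ContinuousAt.eventually_lt (by fun_prop) continuousAt_const (by linarith)
  have hdom : ∀ t : ℝ, ∀ x : ℂ, |x.re| < (1 + |a.re|) / 2 ∧ -(x.im * y) < -(a.im * y) + 1 →
      ‖expDivSinh x (t + y * I)‖ ≤ 2 * Real.exp (-(a.im * y) + 1) / |Real.sin y| *
        Real.exp (-(1 - (1 + |a.re|) / 2) * |t|) := fun t x hx => by
    refine (norm_expDivSinh_le x (by simpa using hy)).trans ?_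
    simp only [add_re, add_im, ofReal_re, ofReal_im, re_ofReal_mul, im_ofReal_mul, I_re, I_im,
      mul_zero, mul_one, add_zero, zero_add]
    gcongr
    exacts [hx.2.le, hx.1.le]
  refine (hasDerivAt_integral_of_dominated_loc_of_deriv_le (hre.and him)
    ((hre.and him).mono fun x hx => ?_) (integrable_div_add_mul_I (integrable_expDivSinh ha hy) hy₀)
    (F' := fun x (t : ℝ) => expDivSinh x (t + y * I))
    (integrable_expDivSinh ha hy).aestronglyMeasurable (ae_of_all _ hdom)
    ((integrable_exp_neg_mul_abs (by linarith)).const_mul _) (ae_of_all _ fun t x _ => ?_)).2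
  · exact (integrable_div_add_mul_I (integrable_expDivSinh (by linarith [hx.1]) hy)
      hy₀).aestronglyMeasurable
  · exact hasDerivAt_expDivSinh_div x fun h => hy₀ (by simpa using congrArg im h)

theorem tendsto_expDivSinhPrimitive_add_mul_I_atTop (a : ℂ) (hy : 0 < y) :
    Tendsto (fun s : ℝ => expDivSinhPrimitive y (a + s * I)) atTop (𝓝 0) := by
  have hnorm : ∀ s t : ℝ, ‖expDivSinh (a + s * I) (t + y * I) / (t + y * I)‖ =
      Real.exp (-(y * s)) * ‖expDivSinh a (t + y * I) / (t + y * I)‖ := fun s t => by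
    have hexp : ‖Complex.exp ((a + s * I) * (t + y * I))‖ =
        Real.exp (-(y * s)) * ‖Complex.exp (a * (t + y * I))‖ := by
      rw [norm_exp, norm_exp, ← Real.exp_add]
      congr 1
      simp only [mul_re, mul_im, add_re, add_im, ofReal_re, ofReal_im, I_re, I_im, mul_zero,
        mul_one, sub_self, add_zero, zero_add]
      ring
    simp only [expDivSinh, norm_div, hexp, mul_div_assoc]
  have hdecay : Tendsto (fun s => Real.exp (-(y * s))) atTop (𝓝 0) :=
    Real.tendsto_exp_neg_atTop_nhds_zero.comp (tendsto_id.const_mul_atTop hy)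
  refine squeeze_zero_norm (fun s => ?_) (by
    simpa only [zero_mul] using
      hdecay.mul_const (∫ t : ℝ, ‖expDivSinh a (t + y * I) / (t + y * I)‖))
  refine (norm_integral_le_integral_norm _).trans_eq ?_
  simp_rw [hnorm, integral_const_mul]

theorem exp_half_expDivSinhPrimitive_mul_one_add_exp (ha : |a.re| < 1) (hy : y ∈ Set.Ioo 0 π) :
    Complex.exp (expDivSinhPrimitive y a / 2) * (1 + Complex.exp (π * I * a)) = 1 := by
  set g : ℂ → ℂ := fun x =>
    Complex.exp (expDivSinhPrimitive y x / 2) * (1 + Complex.exp (π * I * x))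
  have hderiv : ∀ x : ℂ, |x.re| < 1 → HasDerivAt g 0 x := fun x hx => by
    have hprim := hasDerivAt_expDivSinhPrimitive hx (sin_pos_of_mem_Ioo hy).ne'
    rw [integral_expDivSinh hx hy] at hprim
    refine ((hprim.div_const 2).cexp.mul
      (((hasDerivAt_id x).const_mul (π * I : ℂ)).cexp.const_add 1)).congr_deriv ?_
    have := one_add_exp_pi_mul_I_mul_ne_zero hx
    simp only [id_eq]
    field_simp
    ring
  have hconst : ∀ s : ℝ, g (a + s * I) = g a := fun s =>
    eq_of_hasDerivAt_zero_of_abs_re_lt hderiv (by simpa using ha) ha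
  have hlim : Tendsto (fun s : ℝ => g (a + s * I)) atTop (𝓝 1) := by
    have hexp : Tendsto (fun s : ℝ => Complex.exp (π * I * (a + s * I))) atTop (𝓝 0) := by
      rw [tendsto_exp_nhds_zero_iff]
      have hre : ∀ s : ℝ, (π * I * (a + s * I)).re = -(π * a.im) + -π * s := fun s => by
        simp only [mul_re, mul_im, add_re, add_im, ofReal_re, ofReal_im, I_re, I_im, mul_zero,
          mul_one, zero_mul, sub_self, zero_sub, neg_mul, add_zero]
        ring
      simp_rw [hre]
      exact tendsto_atBot_add_const_left _ _ (tendsto_id.const_mul_atTop_of_neg (by simp [pi_pos]))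
    simpa using (((tendsto_expDivSinhPrimitive_add_mul_I_atTop a hy.1).div_const 2).cexp).mul
      (hexp.const_add 1)
  simp_rw [hconst] at hlim
  exact tendsto_nhds_unique tendsto_const_nhds hlim

end ExpDivSinh

section QuantumDilogarithm

variable {b ε : ℝ} {z : ℂ}

theorem ebIntegrand_eq_expDivSinh_mul_expDivSinh_div {a : ℂ}
    (ha : a * (b + (b : ℂ)⁻¹) = -2 * I * z) (t : ℝ) :
    ebIntegrand b ε z t =
      expDivSinh a ((b * t : ℝ) + (b * ε : ℝ) * I) *
        expDivSinh a ((b⁻¹ * t : ℝ) + (b⁻¹ * ε : ℝ) * I) / (t + ε * I) := by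
  have hexp : -2 * I * z * (t + I * ε) = a * (b * (t + I * ε)) + a * ((b : ℂ)⁻¹ * (t + I * ε)) := by
    linear_combination -(t + I * ε) * ha
  have hline : ∀ c : ℝ, ((c * t : ℝ) + (c * ε : ℝ) * I : ℂ) = c * (t + I * ε) := fun c => by
    push_cast
    ring
  rw [ebIntegrand, expDivSinh, expDivSinh, hline, hline, hexp, Complex.exp_add, mul_comm (ε : ℂ) I,
    ofReal_inv, div_mul_div_comm, div_div]
  congr 1
  ring

theorem integrable_ebIntegrand (hb : 0 < b) (hsin : Real.sin (b * ε) ≠ 0)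
    (hsin' : Real.sin (b⁻¹ * ε) ≠ 0) (hz : |z.im| < (b + b⁻¹) / 2) :
    Integrable (ebIntegrand b ε z) := by
  have hQ : 0 < b + b⁻¹ := by positivity
  have hQ' : (b : ℂ) + (b : ℂ)⁻¹ ≠ 0 := by exact_mod_cast hQ.ne'
  obtain ⟨a, ha⟩ : ∃ a : ℂ, a * (b + (b : ℂ)⁻¹) = -2 * I * z := ⟨_, div_mul_cancel₀ _ hQ'⟩
  have ha_re : |a.re| < 1 := by
    have hre : a.re * (b + b⁻¹) = 2 * z.im := by
      simpa [← ofReal_inv] using congrArg re ha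
    refine lt_of_mul_lt_mul_right ?_ hQ.le
    rw [← abs_of_pos hQ, ← abs_mul, hre, abs_mul, abs_two, abs_of_pos hQ]
    linarith
  have hbound : ∀ t : ℝ, ‖expDivSinh a ((b⁻¹ * t : ℝ) + (b⁻¹ * ε : ℝ) * I)‖ ≤
      2 * Real.exp (-(a.im * (b⁻¹ * ε))) / |Real.sin (b⁻¹ * ε)| := fun t => by
    refine (norm_expDivSinh_le a (by simpa using hsin')).trans ?_
    simp only [add_re, add_im, ofReal_re, ofReal_im, re_ofReal_mul, im_ofReal_mul, I_re, I_im,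
      mul_zero, mul_one, add_zero, zero_add]
    exact mul_le_of_le_one_right (by positivity) (Real.exp_le_one_iff.2 <|
      mul_nonpos_of_nonpos_of_nonneg (by linarith) (abs_nonneg _))
  have hε : ε ≠ 0 := fun h => hsin (by simp [h])
  have hmul := ((integrable_expDivSinh ha_re hsin).comp_mul_left' hb.ne').mul_bdd
    ((continuous_expDivSinh_add_mul_I a hsin').comp
      (continuous_const_mul b⁻¹)).aestronglyMeasurable (ae_of_all _ hbound)
  exact (integrable_div_add_mul_I hmul hε).congr
    (ae_of_all _ fun t => (ebIntegrand_eq_expDivSinh_mul_expDivSinh_div ha t).symm)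

theorem ebIntegrand_sub_ebIntegrand (hb : b ≠ 0) (hsin' : Real.sin (b⁻¹ * ε) ≠ 0) (t : ℝ) :
    ebIntegrand b ε (z - I * (b : ℂ)⁻¹ / 2) t - ebIntegrand b ε (z + I * (b : ℂ)⁻¹ / 2) t =
      -2 * b * (expDivSinh (-2 * I * z / b) ((b * t : ℝ) + (b * ε : ℝ) * I) /
        ((b * t : ℝ) + (b * ε : ℝ) * I)) := by
  have hb' : (b : ℂ) ≠ 0 := ofReal_ne_zero.2 hb
  obtain ⟨w, hw⟩ : ∃ w : ℂ, (t : ℂ) + I * ε = w := ⟨_, rfl⟩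
  have hsinh : Complex.sinh ((b : ℂ)⁻¹ * w) ≠ 0 :=
    sinh_ne_zero_of_sin_im_ne_zero (by simpa [← hw, ← ofReal_inv] using hsin')
  have hline : ((b * t : ℝ) + (b * ε : ℝ) * I : ℂ) = b * w := by
    rw [← hw]
    push_cast
    ring
  have hexp_sub : Complex.exp (-2 * I * (z - I * (b : ℂ)⁻¹ / 2) * w) =
      Complex.exp (-2 * I * z * w) * Complex.exp (-((b : ℂ)⁻¹ * w)) := by
    rw [← Complex.exp_add]
    congr 1
    linear_combination (b : ℂ)⁻¹ * w * I_sq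
  have hexp_add : Complex.exp (-2 * I * (z + I * (b : ℂ)⁻¹ / 2) * w) =
      Complex.exp (-2 * I * z * w) * Complex.exp ((b : ℂ)⁻¹ * w) := by
    rw [← Complex.exp_add]
    congr 1
    linear_combination -(b : ℂ)⁻¹ * w * I_sq
  have hexp_div : -2 * I * z / b * (b * w) = -2 * I * z * w := by field_simp
  rw [ebIntegrand, ebIntegrand, expDivSinh, hw, hline, hexp_sub, hexp_add, hexp_div, ← sub_div,
    ← mul_sub, ← neg_sub (Complex.exp _), ← two_sinh]
  generalize Complex.sinh ((b : ℂ)⁻¹ * w) = s at hsinh ⊢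
  field_simp

theorem integral_ebIntegrand_sub_integral_ebIntegrand (hb : 0 < b)
    (hsin : Real.sin (b * ε) ≠ 0) (hsin' : Real.sin (b⁻¹ * ε) ≠ 0) (hz : |z.im| < b / 2) :
    (∫ t, ebIntegrand b ε (z - I * (b : ℂ)⁻¹ / 2) t) -
        ∫ t, ebIntegrand b ε (z + I * (b : ℂ)⁻¹ / 2) t =
      -2 * expDivSinhPrimitive (b * ε) (-2 * I * z / b) := by
  have hb' : 0 < b⁻¹ := inv_pos.2 hb
  obtain ⟨hz₁, hz₂⟩ := abs_lt.1 hz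
  have hshift : (I * (b : ℂ)⁻¹ / 2).im = b⁻¹ / 2 := by simp [← ofReal_inv]
  have hint_sub := integrable_ebIntegrand (z := z - I * (b : ℂ)⁻¹ / 2) hb hsin hsin' (by
    rw [sub_im, hshift, abs_lt]
    constructor <;> linarith)
  have hint_add := integrable_ebIntegrand (z := z + I * (b : ℂ)⁻¹ / 2) hb hsin hsin' (by
    rw [add_im, hshift, abs_lt]
    constructor <;> linarith)
  rw [← integral_sub hint_sub hint_add]
  simp_rw [ebIntegrand_sub_ebIntegrand hb.ne' hsin', integral_const_mul]
  rw [Measure.integral_comp_mul_left (fun t : ℝ =>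
    expDivSinh (-2 * I * z / b) (t + (b * ε : ℝ) * I) / (t + (b * ε : ℝ) * I)),
    abs_of_pos hb', real_smul, ofReal_inv, ← mul_assoc,
    mul_inv_cancel_right₀ (ofReal_ne_zero.2 hb.ne'), expDivSinhPrimitive]

theorem mul_mem_Ioo_zero_pi_of_lt_pi_mul_inv {c : ℝ} (hc : 0 < c) (hε : 0 < ε) (hεc : ε < π * c⁻¹) :
    c * ε ∈ Set.Ioo 0 π :=
  ⟨mul_pos hc hε, by rwa [← div_eq_mul_inv, lt_div_iff₀' hc] at hεc⟩

theorem statement3_general (b ε : ℝ) (hb : 0 < b) (hε : 0 < ε) (hεb : ε < π * min b b⁻¹) (z : ℂ)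
    (hz : |z.im| < b / 2) :
    ebE b ε (z - Complex.I * (b : ℂ)⁻¹ / 2) =
      (1 + Complex.exp (2 * (π : ℂ) * (b : ℂ)⁻¹ * z)) *
        ebE b ε (z + Complex.I * (b : ℂ)⁻¹ / 2) := by
  have hbε : b * ε ∈ Set.Ioo 0 π :=
    mul_mem_Ioo_zero_pi_of_lt_pi_mul_inv hb hε (hεb.trans_le (by gcongr; exact min_le_right _ _))
  have hbε' : b⁻¹ * ε ∈ Set.Ioo 0 π :=
    mul_mem_Ioo_zero_pi_of_lt_pi_mul_inv (inv_pos.2 hb) hε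
      (hεb.trans_le (by gcongr; simp))
  have hre : (-2 * I * z / b).re = 2 * z.im / b := by
    rw [div_ofReal_re]
    simp
  have hre_lt : |(-2 * I * z / b).re| < 1 := by
    rw [hre, abs_div, abs_of_pos hb, div_lt_one hb, abs_mul, abs_two]
    linarith
  have hdiff := integral_ebIntegrand_sub_integral_ebIntegrand hb (sin_pos_of_mem_Ioo hbε).ne'
    (sin_pos_of_mem_Ioo hbε').ne' hz
  have hprim := exp_half_expDivSinhPrimitive_mul_one_add_exp hre_lt hbε
  rw [show π * I * (-2 * I * z / b) = 2 * π * (b : ℂ)⁻¹ * z by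
    linear_combination -2 * π * z * (b : ℂ)⁻¹ * I_sq] at hprim
  rw [ebE, ebE, eq_inv_of_mul_eq_one_right hprim, ← Complex.exp_neg, ← Complex.exp_add]
  congr 1
  linear_combination (1 / 4 : ℂ) * hdiff

end QuantumDilogarithm

/-- the `b⁻¹`-shift equation
`e_b(z − ib⁻¹/2) = (1 + e^{2πb⁻¹z})·e_b(z + ib⁻¹/2)` on the strip `|Im z| < b/2`. -/
theorem statement3 (b : ℝ) (hb : 0 < b) (z : ℂ) (hz : |z.im| < b / 2) :
    eb b (z - Complex.I * (b : ℂ)⁻¹ / 2) =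
      (1 + Complex.exp (2 * (π : ℂ) * (b : ℂ)⁻¹ * z)) *
        eb b (z + Complex.I * (b : ℂ)⁻¹ / 2) :=
  have hε : 0 < π * min b b⁻¹ := mul_pos pi_pos (lt_min hb (inv_pos.2 hb))
  statement3_general b _ hb (half_pos hε) (half_lt_self hε) z hz

end
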